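/- arXiv:2509.07836 — 2 statements merged into one kernel-verified Lean document; each statement's English description precedes it below -/
import Mathlib

section
/- Let x ∈ ℝⁿ be not a K-critical point of F, let a ∈ P_x, Ω > 0, and let K₂ > 0 satisfy ‖D²f^{a_j}(y)‖ ≤ K₂ for all y ∈ ℝⁿ and all j. Suppose v ∈ ℝⁿ, v ≠ 0, satisfies Δ_{−K}(Df^{a_j}(x)v) < 0 for every j ∈ {1, …, ω(x)} (i.e., v is a K-descent direction of each f^{a_j} at x). Then for each j there exists t̄_j > 0 with ‖t̄_j v‖ ≤ Ω such that Δ_{−K}(m^{a_j}(t̄_j v)) ≤ Δ_{−K}(m^{a_j}(t v)) for every t ≥ 0 with ‖t v‖ ≤ Ω; moreover, Δ_{−K}(m^{a_j}(0) − m^{a_j}(t̄_j v)) ≥ −(1/2) · (Δ_{−K}(Df^{a_j}(x)v)/‖v‖) · min{ −Δ_{−K}(Df^{a_j}(x)v)/(‖v‖ K₂), Ω }. -/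
/-!
Write `Δ` for `oriDist (-K)`, `u = Df(x)v` and `H = D²f(x)`, so that `m(tv) = t u + (t²/2) H[v, v]`.
A minimizer `t̄` of the continuous function `t ↦ Δ(m(tv))` exists on the compact interval
`[0, Ω/‖v‖]`. Comparing it with the explicit step `T = min {-Δ(u)/(‖v‖ K₂), Ω} / ‖v‖`, positive
homogeneity and the `1`-Lipschitz property of `Δ` give
`Δ(m(t̄v)) ≤ Δ(m(Tv)) ≤ T Δ(u) + (T²/2) K₂ ‖v‖² ≤ T Δ(u) / 2 < 0`,
the third inequality because `K₂ ‖v‖² T ≤ -Δ(u)`. Since `Δ(0) = 0`, this forces `t̄ > 0`. Finally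
`-Δ(w) ≤ Δ(-w)` whenever `Δ(w) < 0` (`neg_oriDist_le`, where pointedness of `K` is used), and with
`w = m(t̄v)` this is the claimed decrease `Δ(m(0) - m(t̄v)) ≥ -T Δ(u) / 2`.

If `m = 0`, then `K` is the whole space and `Δ` vanishes identically, so no descent direction
exists.
-/

open Set Filter Topology Pointwise

noncomputable section

/-- Euclidean space ℝⁿ. -/
abbrev Rvec (n : ℕ) := EuclideanSpace ℝ (Fin n)

/-- The oriented distance function Δ_A(y) := dist(y, A) − dist(y, Aᶜ). -/
def oriDist {E : Type*} [NormedAddCommGroup E] (A : Set E) (y : E) : ℝ :=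
  Metric.infDist y A - Metric.infDist y Aᶜ

/-- K-minimal elements of A: Min(A, K) = {y ∈ A : (y − K) ∩ A = {y}}. -/
def minSet {E : Type*} [AddGroup E] (K A : Set E) : Set E :=
  {y ∈ A | {z ∈ A | y - z ∈ K} = {y}}

/-- Weakly K-minimal elements of A: WMin(A, K) = {y ∈ A : (y − int K) ∩ A = ∅}. -/
def wminSet {E : Type*} [AddGroup E] [TopologicalSpace E] (K A : Set E) : Set E :=
  {y ∈ A | {z ∈ A | y - z ∈ interior K} = ∅}

/-- A closed, convex, pointed cone with nonempty interior. -/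
structure IsSolidPointedCone {E : Type*} [NormedAddCommGroup E] [NormedSpace ℝ E]
    (K : Set E) : Prop where
  closed : IsClosed K
  convex : Convex ℝ K
  cone : ∀ ⦃t : ℝ⦄, 0 ≤ t → ∀ ⦃y⦄, y ∈ K → t • y ∈ K
  pointed : K ∩ (-K) ⊆ {0}
  solid : (interior K).Nonempty

variable {n m p : ℕ}

/-- The set-valued objective F(x) = {f¹(x), …, fᵖ(x)}. -/
def Fimg (f : Fin p → Rvec n → Rvec m) (x : Rvec n) : Set (Rvec m) :=
  Set.range fun i => f i x

/-- ω(x) := |Min(F(x), K)|. -/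
def omegaF (K : Set (Rvec m)) (f : Fin p → Rvec n → Rvec m) (x : Rvec n) : ℕ :=
  (minSet K (Fimg f x)).ncard

/-- The partition set P_x: tuples a = (a₁, …, a_{ω(x)}) of indices with
each f^{a_j}(x) ∈ Min(F(x), K) and j ↦ f^{a_j}(x) an enumeration of WMin(F(x), K). -/
def partSet (K : Set (Rvec m)) (f : Fin p → Rvec n → Rvec m) (x : Rvec n) :
    Set (Fin (omegaF K f x) → Fin p) :=
  {a | (∀ j, f (a j) x ∈ minSet K (Fimg f x)) ∧
    Function.Injective (fun j => f (a j) x) ∧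
    (Set.range fun j => f (a j) x) = wminSet K (Fimg f x)}

/-- The quadratic model m^i(s) := Df^i(x)s + ½ D²f^i(x)[s, s]. -/
def model (f : Fin p → Rvec n → Rvec m) (i : Fin p) (x s : Rvec n) : Rvec m :=
  fderiv ℝ (f i) x s + (2⁻¹ : ℝ) • fderiv ℝ (fderiv ℝ (f i)) x s s

/-- Θ_x(a, s) := max_j max{Δ_{−K}(m^{a_j}(s)), Δ_{−K}(Df^{a_j}(x)s)}. -/
def Theta (K : Set (Rvec m)) (f : Fin p → Rvec n → Rvec m) (x : Rvec n)
    (a : Fin (omegaF K f x) → Fin p) (s : Rvec n) : ℝ :=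
  ⨆ j : Fin (omegaF K f x),
    max (oriDist (-K) (model f (a j) x s)) (oriDist (-K) (fderiv ℝ (f (a j)) x s))

/-- θ(x) := min over (a, s) ∈ P_x × {‖s‖ ≤ Ωmax} of Θ_x(a, s). -/
def thetaVal (K : Set (Rvec m)) (f : Fin p → Rvec n → Rvec m) (Ωmax : ℝ) (x : Rvec n) : ℝ :=
  sInf {r | ∃ a ∈ partSet K f x, ∃ s : Rvec n, ‖s‖ ≤ Ωmax ∧ r = Theta K f x a s}

/-- x is a K-critical point of F: there are no a ∈ P_x and s with
Df^{a_j}(x)s ∈ −int K for all j. -/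
def KCritical (K : Set (Rvec m)) (f : Fin p → Rvec n → Rvec m) (x : Rvec n) : Prop :=
  ¬ ∃ a ∈ partSet K f x, ∃ s : Rvec n, ∀ j, fderiv ℝ (f (a j)) x s ∈ -(interior K)

/-- Lower set-less relation: A ≼ˡ_K B iff B ⊆ A + K. -/
def lowerLe (K A B : Set (Rvec m)) : Prop := B ⊆ A + K

/-- Strict lower set-less relation: A ≺ˡ_K B iff B ⊆ A + int K. -/
def lowerLt (K A B : Set (Rvec m)) : Prop := B ⊆ A + interior K

/-- x is a regular point of F. -/
def RegularPt (K : Set (Rvec m)) (f : Fin p → Rvec n → Rvec m) (x : Rvec n) : Prop :=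
  minSet K (Fimg f x) = wminSet K (Fimg f x) ∧
    ∀ᶠ y in 𝓝 x, omegaF K f y = omegaF K f x

/-- For an arbitrary set, a point with negative oriented distance lies in the set. -/
lemma mem_of_oriDist_neg {E : Type*} [NormedAddCommGroup E] {A : Set E} {u : E}
    (h : oriDist A u < 0) : u ∈ A := by
  by_contra hu
  have h1 : Metric.infDist u Aᶜ = 0 := Metric.infDist_zero_of_mem hu
  have h2 : 0 ≤ Metric.infDist u A := Metric.infDist_nonneg
  unfold oriDist at h
  linarith

lemma oriDist_of_mem {E : Type*} [NormedAddCommGroup E] {A : Set E} {u : E}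
    (h : u ∈ A) : oriDist A u = -Metric.infDist u Aᶜ := by
  simp [oriDist, Metric.infDist_zero_of_mem h]

/-- The `1`-Lipschitz bound for the oriented distance, restricted to perturbations that stay
inside the set; there it reduces to the Lipschitz bound for `infDist · Aᶜ`. -/
lemma oriDist_add_le {E : Type*} [NormedAddCommGroup E] {A : Set E} {u w : E} {c : ℝ}
    (hw : ‖w‖ ≤ c) (h : oriDist A u + c < 0) : oriDist A (u + w) ≤ oriDist A u + c := by
  have hu : u ∈ A := mem_of_oriDist_neg (by linarith [norm_nonneg w])
  rw [oriDist_of_mem hu] at h ⊢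
  have hd : dist u (u + w) = ‖w‖ := by simp
  have huw : u + w ∈ A := by
    by_contra hn
    have := Metric.infDist_le_dist_of_mem (x := u) (s := Aᶜ) hn
    linarith
  rw [oriDist_of_mem huw]
  have := Metric.infDist_le_infDist_add_dist (s := Aᶜ) (x := u) (y := u + w)
  linarith

lemma IsSolidPointedCone.smul_neg_eq {E : Type*} [NormedAddCommGroup E] [NormedSpace ℝ E]
    {K : Set E} (hK : IsSolidPointedCone K) {t : ℝ} (ht : 0 < t) : t • (-K) = -K := by
  ext y
  rw [Set.mem_smul_set_iff_inv_smul_mem₀ ht.ne', Set.mem_neg, Set.mem_neg]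
  constructor
  · intro h
    have := hK.cone ht.le h
    rwa [smul_neg, smul_inv_smul₀ ht.ne'] at this
  · intro h
    have := hK.cone (inv_pos.2 ht).le h
    rwa [smul_neg] at this

lemma IsSolidPointedCone.oriDist_smul {E : Type*} [NormedAddCommGroup E] [NormedSpace ℝ E]
    {K : Set E} (hK : IsSolidPointedCone K) {t : ℝ} (ht : 0 < t) (u : E) :
    oriDist (-K) (t • u) = t * oriDist (-K) u := by
  have h1 := infDist_smul₀ ht.ne' (-K) u
  have h2 := infDist_smul₀ ht.ne' (-K)ᶜ u
  rw [Set.compl_eq_univ_sdiff, Set.smul_set_sdiff₀ ht.ne', Set.smul_set_univ₀ ht.ne', hK.smul_neg_eq ht,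
    ← Set.compl_eq_univ_sdiff] at h2
  rw [hK.smul_neg_eq ht] at h1
  rw [Real.norm_of_nonneg ht.le] at h1 h2
  rw [oriDist, oriDist, h1, h2]
  ring

lemma IsSolidPointedCone.zero_mem {E : Type*} [NormedAddCommGroup E] [NormedSpace ℝ E]
    {K : Set E} (hK : IsSolidPointedCone K) : (0 : E) ∈ -K := by
  obtain ⟨y, hy⟩ := hK.solid
  simpa using hK.cone le_rfl (interior_subset hy)

/-- Positive homogeneity gives `Δ(0) = Δ(2 • 0) = 2 Δ(0)`. -/
lemma IsSolidPointedCone.oriDist_zero {E : Type*} [NormedAddCommGroup E] [NormedSpace ℝ E]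
    {K : Set E} (hK : IsSolidPointedCone K) : oriDist (-K) (0 : E) = 0 := by
  have h := hK.oriDist_smul two_pos (0 : E)
  rw [smul_zero] at h
  linarith

/-- The consequence `-Δ(w) ≤ Δ(-w)` of subadditivity, proved directly for `Δ(w) < 0`: a point of
`-K` closer to `-w` than `-Δ(w)` would have its negative in `-K` as well, hence be `0`, and then
`0` would lie closer to `w` than the complement of `-K`, in whose closure it lies. -/
lemma IsSolidPointedCone.neg_oriDist_le {E : Type*} [NormedAddCommGroup E] [NormedSpace ℝ E]
    {K : Set E} (hK : IsSolidPointedCone K) {w : E} (h : oriDist (-K) w < 0) :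
    -oriDist (-K) w ≤ oriDist (-K) (-w) := by
  have hw := mem_of_oriDist_neg h
  have h0 : Metric.infDist (0 : E) (-K)ᶜ = 0 := by
    have := hK.oriDist_zero
    rw [oriDist_of_mem hK.zero_mem] at this
    linarith
  have hne : w ≠ 0 := by
    rintro rfl
    linarith [hK.oriDist_zero]
  have hnw : -w ∉ -K := fun hn => hne (hK.pointed ⟨by simpa using hn, hw⟩)
  have key : Metric.infDist w (-K)ᶜ ≤ Metric.infDist (-w) (-K) := by
    rw [Metric.le_infDist ⟨0, hK.zero_mem⟩]
    intro b hb
    by_contra! hlt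
    have hdist : dist w (-b) = dist (-w) b := by rw [← dist_neg_neg, neg_neg]
    have hnb : -b ∈ -K := by
      by_contra hn
      have := Metric.infDist_le_dist_of_mem (x := w) (s := (-K)ᶜ) hn
      linarith
    have hb0 : b = 0 := hK.pointed ⟨by simpa using hnb, hb⟩
    subst hb0
    have := Metric.infDist_le_infDist_add_dist (s := (-K)ᶜ) (x := w) (y := 0)
    rw [neg_zero] at hdist
    linarith
  rw [oriDist_of_mem hw, neg_neg, oriDist, Metric.infDist_zero_of_mem (s := (-K)ᶜ) hnw]
  linarith

/-- Cauchy-type decrease along a K-descent direction v of every f^{a_j}. -/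
theorem stmt9 (n m p : ℕ) (K : Set (Rvec m)) (hK : IsSolidPointedCone K)
    (f : Fin p → Rvec n → Rvec m) (hf : ∀ i, ContDiff ℝ 2 (f i))
    (x : Rvec n) (hxc : ¬ KCritical K f x)
    (a : Fin (omegaF K f x) → Fin p) (ha : a ∈ partSet K f x)
    (Ω : ℝ) (hΩ : 0 < Ω) (K₂ : ℝ) (hK₂ : 0 < K₂)
    (hHess : ∀ (y : Rvec n) (j : Fin (omegaF K f x)),
      ‖fderiv ℝ (fderiv ℝ (f (a j))) y‖ ≤ K₂)
    (v : Rvec n) (hv : v ≠ 0)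
    (hdesc : ∀ j, oriDist (-K) (fderiv ℝ (f (a j)) x v) < 0) :
    ∀ j, ∃ tbar : ℝ, 0 < tbar ∧ ‖tbar • v‖ ≤ Ω ∧
      (∀ t : ℝ, 0 ≤ t → ‖t • v‖ ≤ Ω →
        oriDist (-K) (model f (a j) x (tbar • v)) ≤ oriDist (-K) (model f (a j) x (t • v))) ∧
      -(2⁻¹ : ℝ) * (oriDist (-K) (fderiv ℝ (f (a j)) x v) / ‖v‖) *
          min (-(oriDist (-K) (fderiv ℝ (f (a j)) x v)) / (‖v‖ * K₂)) Ω ≤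
        oriDist (-K) (model f (a j) x 0 - model f (a j) x (tbar • v)) := by
  intro j
  have hd := hdesc j
  set u := fderiv ℝ (f (a j)) x v with hu
  set d := oriDist (-K) u with hd'
  set H := fderiv ℝ (fderiv ℝ (f (a j))) x with hH
  have hHn : ‖H‖ ≤ K₂ := hHess x j
  have hvn : 0 < ‖v‖ := norm_pos_iff.2 hv
  have hm0 : model f (a j) x 0 = 0 := by simp [model]
  have hmt : ∀ t : ℝ, model f (a j) x (t • v) = t • u + (2⁻¹ * t ^ 2 : ℝ) • H v v := by
    intro t
    simp only [model, map_smul, ← hu, ← hH, _root_.smul_apply, smul_smul]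
    congr 2
    ring
  have hbd : ∀ t : ℝ, 0 ≤ t → (‖t • v‖ ≤ Ω ↔ t ≤ Ω / ‖v‖) := by
    intro t ht
    rw [norm_smul, Real.norm_of_nonneg ht, le_div_iff₀ hvn]
  have hcont : Continuous fun t : ℝ => oriDist (-K) (model f (a j) x (t • v)) := by
    simp only [hmt, oriDist]
    refine Continuous.sub ?_ ?_ <;>
      exact (Metric.continuous_infDist_pt _).comp (by fun_prop)
  obtain ⟨tb, htb, hmin⟩ := (isCompact_Icc (a := (0 : ℝ)) (b := Ω / ‖v‖)).exists_isMinOn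
    ⟨0, le_rfl, (div_pos hΩ hvn).le⟩ hcont.continuousOn
  set M := min (-d / (‖v‖ * K₂)) Ω with hM
  have hMpos : 0 < M := lt_min (div_pos (neg_pos.2 hd) (mul_pos hvn hK₂)) hΩ
  set T := M / ‖v‖ with hT
  have hTpos : 0 < T := div_pos hMpos hvn
  have hTle : T ≤ Ω / ‖v‖ := div_le_div_of_nonneg_right (min_le_right _ _) hvn.le
  -- The step `T` is at most the minimizer of `t ↦ t d + (t² / 2) K₂ ‖v‖²`.
  have hTK : T * (K₂ * ‖v‖ ^ 2) ≤ -d := by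
    have h1 : M * (‖v‖ * K₂) ≤ -d := (le_div_iff₀ (mul_pos hvn hK₂)).1 (min_le_left _ _)
    have h2 : T * ‖v‖ = M := div_mul_cancel₀ _ hvn.ne'
    calc T * (K₂ * ‖v‖ ^ 2) = (T * ‖v‖) * (‖v‖ * K₂) := by ring
      _ ≤ -d := by rwa [h2]
  have hquad : ‖(2⁻¹ * T ^ 2 : ℝ) • H v v‖ ≤ 2⁻¹ * T * (-d) := by
    have h1 : ‖H v v‖ ≤ K₂ * ‖v‖ ^ 2 := by
      calc ‖H v v‖ ≤ ‖H‖ * ‖v‖ * ‖v‖ := H.le_opNorm₂ v v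
        _ ≤ K₂ * ‖v‖ * ‖v‖ := by gcongr
        _ = K₂ * ‖v‖ ^ 2 := by ring
    rw [norm_smul, Real.norm_of_nonneg (by positivity)]
    calc 2⁻¹ * T ^ 2 * ‖H v v‖ ≤ 2⁻¹ * T ^ 2 * (K₂ * ‖v‖ ^ 2) := by gcongr
      _ = 2⁻¹ * T * (T * (K₂ * ‖v‖ ^ 2)) := by ring
      _ ≤ 2⁻¹ * T * (-d) := by gcongr
  have hTd : T * d < 0 := mul_neg_of_pos_of_neg hTpos hd
  have hmodT : oriDist (-K) (model f (a j) x (T • v)) ≤ 2⁻¹ * (T * d) := by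
    have h1 := hK.oriDist_smul hTpos u
    rw [← hd'] at h1
    rw [hmt]
    have := oriDist_add_le (A := -K) (u := T • u) hquad (by rw [h1]; linarith)
    rw [h1] at this
    linarith
  have hmb : oriDist (-K) (model f (a j) x (tb • v)) ≤ 2⁻¹ * (T * d) :=
    (hmin ⟨hTpos.le, hTle⟩).trans hmodT
  have htbpos : 0 < tb := by
    refine lt_of_le_of_ne htb.1 ?_
    rintro rfl
    rw [zero_smul, hm0, hK.oriDist_zero] at hmb
    linarith
  refine ⟨tb, htbpos, (hbd tb htb.1).2 htb.2, fun t ht htΩ => hmin ⟨ht, (hbd t ht).1 htΩ⟩, ?_⟩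
  rw [hm0, zero_sub]
  refine le_trans ?_ (hK.neg_oriDist_le (by linarith))
  have : -(2⁻¹ : ℝ) * (d / ‖v‖) * M = -(2⁻¹ * (T * d)) := by
    rw [hT]
    ring
  linarith
end
end

section
/- Every weakly ≼ˡ_K-minimal solution of the set optimization problem min_{x ∈ ℝⁿ} F(x) is a K-critical point of F; that is, if x̄ ∈ ℝⁿ is such that there exists no x ∈ ℝⁿ with F(x) ≺ˡ_K F(x̄), then there exist no a ∈ P_{x̄} and s ∈ ℝⁿ with Df^{a_j}(x̄)s ∈ −int K for every j ∈ {1, …, ω(x̄)}. -/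
/-!
Suppose `a ∈ P_x̄` and `s` satisfy `Df^{a_j}(x̄)s ∈ -int K` for every `j`. Since `-int K` is open and
stable under positive scaling, the difference quotients along `s` show that
`f^{a_j}(x̄ + ts) - f^{a_j}(x̄) ∈ -int K` for all `j` simultaneously once `t > 0` is small
(`eventually_sub_mem_interior`). The tuple `a` injects into the finite set `Min(F(x̄), K)`, whose
cardinality is `ω(x̄)`, so it enumerates that whole set. By finiteness every element of `F(x̄)`
dominates some minimal one (`exists_minSet_le`), so
`F(x̄) ⊆ {f^{a_j}(x̄)} + K ⊆ F(x̄ + ts) + int K + K ⊆ F(x̄ + ts) + int K`,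
contradicting the weak minimality of `x̄`.
-/

open Set Filter Topology Pointwise

noncomputable section

variable {n m p : ℕ}

namespace IsSolidPointedCone

variable {E : Type*} [NormedAddCommGroup E] [NormedSpace ℝ E] {K : Set E}

lemma zero_mem_s17 (hK : IsSolidPointedCone K) : (0 : E) ∈ K := by
  obtain ⟨y, hy⟩ := hK.solid
  simpa using hK.cone le_rfl (interior_subset hy)

lemma add_mem (hK : IsSolidPointedCone K) {y z : E} (hy : y ∈ K) (hz : z ∈ K) : y + z ∈ K := by
  -- `y + z` is twice the midpoint of `y` and `z`.
  have h := hK.cone (t := 2) (by norm_num)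
    (hK.convex hy hz (a := 2⁻¹) (b := 2⁻¹) (by norm_num) (by norm_num) (by norm_num))
  simpa [smul_smul] using h

lemma add_interior_mem (hK : IsSolidPointedCone K) {y z : E} (hy : y ∈ K)
    (hz : z ∈ interior K) : y + z ∈ interior K := by
  have hsub : K + interior K ⊆ interior K :=
    interior_maximal
      (by rintro _ ⟨u, hu, v, hv, rfl⟩; exact hK.add_mem hu (interior_subset hv))
      isOpen_interior.add_left
  exact hsub (Set.add_mem_add hy hz)

lemma smul_interior_mem (hK : IsSolidPointedCone K) {t : ℝ} (ht : 0 < t) {y : E}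
    (hy : y ∈ interior K) : t • y ∈ interior K := by
  have hsub : t • interior K ⊆ interior K :=
    interior_maximal
      (by rintro _ ⟨u, hu, rfl⟩; exact hK.cone ht.le (interior_subset hu))
      (isOpen_interior.smul₀ ht.ne')
  exact hsub (Set.smul_mem_smul_set hy)

/-- External stability of finite sets: the relation `v - u ∈ K` is a partial order, so below every
element of a finite set there is a minimal one. -/
lemma exists_minSet_le (hK : IsSolidPointedCone K) {A : Set E} (hA : A.Finite) {y : E}
    (hy : y ∈ A) : ∃ z ∈ minSet K A, y - z ∈ K := by
  let _ : PartialOrder E :=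
    { le := fun u v => v - u ∈ K
      le_refl := fun u => by simpa using hK.zero_mem_s17
      le_trans := fun u v w huv hvw => by
        have h := hK.add_mem hvw huv
        rwa [sub_add_sub_cancel] at h
      le_antisymm := fun u v huv hvu => by
        have h : v - u ∈ ({0} : Set E) := hK.pointed ⟨huv, by simpa using hvu⟩
        exact (sub_eq_zero.mp h).symm }
  obtain ⟨z, hzy, hz⟩ := hA.exists_le_minimal hy
  refine ⟨z, ⟨hz.prop, ?_⟩, hzy⟩
  ext w
  constructor
  · rintro ⟨hwA, hw⟩
    exact hz.eq_of_le hwA hw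
  · rintro rfl
    exact ⟨hz.prop, by simpa using hK.zero_mem_s17⟩

/-- A direction in which the derivative lies in `-int K` is a strict descent direction for the
order of `K`. -/
lemma eventually_sub_mem_interior (hK : IsSolidPointedCone K) {X : Type*} [NormedAddCommGroup X]
    [NormedSpace ℝ X] {g : X → E} {x s : X} (hg : DifferentiableAt ℝ g x)
    (hs : fderiv ℝ g x s ∈ -(interior K)) :
    ∀ᶠ t : ℝ in 𝓝[>] 0, g x - g (x + t • s) ∈ interior K := by
  have hlim := (hg.hasFDerivAt.hasLineDerivAt s).tendsto_slope_zero_right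
  filter_upwards [hlim.eventually (isOpen_interior.neg.mem_nhds hs), self_mem_nhdsWithin]
    with t hmem ht
  have h := hK.smul_interior_mem ht (Set.mem_neg.mp hmem)
  rwa [smul_neg, smul_inv_smul₀ (ne_of_gt ht), neg_sub] at h

end IsSolidPointedCone

/-- every weakly ≼ˡ_K-minimal solution of the set optimization problem is a
K-critical point of F. -/
theorem stmt17 (n m p : ℕ) (K : Set (Rvec m)) (hK : IsSolidPointedCone K)
    (f : Fin p → Rvec n → Rvec m) (hf : ∀ i, ContDiff ℝ 2 (f i))
    (xbar : Rvec n)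
    (hmin : ¬ ∃ x : Rvec n, lowerLt K (Fimg f x) (Fimg f xbar)) :
    ¬ ∃ a ∈ partSet K f xbar, ∃ s : Rvec n,
        ∀ j, fderiv ℝ (f (a j)) xbar s ∈ -(interior K) := by
  rintro ⟨a, ⟨ha, hinj, -⟩, s, hs⟩
  have hfin : (Fimg f xbar).Finite := Set.finite_range _
  have hMfin : (minSet K (Fimg f xbar)).Finite := hfin.subset fun _ h => h.1
  -- Comparing cardinalities avoids `Min ⊆ WMin`, which fails for `m = 0`.
  have hrange : (Set.range fun j => f (a j) xbar) = minSet K (Fimg f xbar) := by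
    refine Set.eq_of_subset_of_ncard_le (Set.range_subset_iff.mpr ha) ?_ hMfin
    rw [← Set.image_univ, Set.ncard_image_of_injective _ hinj, Set.ncard_univ, Nat.card_fin]
    rfl
  have hev : ∀ᶠ t : ℝ in 𝓝[>] 0, ∀ j,
      f (a j) xbar - f (a j) (xbar + t • s) ∈ interior K :=
    Filter.eventually_all.mpr fun j =>
      hK.eventually_sub_mem_interior ((hf (a j)).differentiable (by norm_num) xbar) (hs j)
  obtain ⟨t, ht⟩ := hev.exists
  refine hmin ⟨xbar + t • s, fun y hy => ?_⟩
  obtain ⟨z, hz, hyz⟩ := hK.exists_minSet_le hfin hy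
  obtain ⟨j, rfl⟩ := hrange ▸ hz
  refine ⟨f (a j) (xbar + t • s), ⟨a j, rfl⟩, _, hK.add_interior_mem hyz (ht j), ?_⟩
  simp
end
end
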